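/- For every n ∈ ℕ, every real α > −1, and every k ∈ ℕ, the k-th moment of the Rakhmanov density of the orthonormal Laguerre polynomial is ⟨x^k⟩_{n,α} = ( n! Γ(k+α+1) / Γ(n+α+1) ) · Σ_{r=0}^{n} C(k, n−r)² · C(k+α+r, r), where C(k, n−r) is the ordinary binomial coefficient and C(k+α+r, r) = Γ(k+α+r+1)/( r! Γ(k+α+1) ) is the generalized binomial coefficient. -/

import Mathlib

open MeasureTheory Real

/-- The generalized Laguerre polynomial `L_n^{(α)}`. -/
noncomputable def laguerreL (α : ℝ) (n : ℕ) (x : ℝ) : ℝ :=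
  ∑ k ∈ Finset.range (n + 1),
    (-1) ^ k * Real.Gamma ((n : ℝ) + α + 1) /
      (Real.Gamma ((k : ℝ) + α + 1) * ((n - k).factorial : ℝ) * (k.factorial : ℝ)) * x ^ k

/-- The Rakhmanov density of the orthonormal Laguerre polynomial
`p_n^{(α)}(x) = (n!/Γ(n+α+1))^{1/2} L_n^{(α)}(x)`, i.e.
`ρ_{n,α}(x) = p_n^{(α)}(x)^2 x^α e^{-x}`. -/
noncomputable def laguerreρ (α : ℝ) (n : ℕ) (x : ℝ) : ℝ :=
  ((n.factorial : ℝ) / Real.Gamma ((n : ℝ) + α + 1)) * (laguerreL α n x) ^ 2 *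
    x ^ α * Real.exp (-x)

lemma lagL_zero (α x : ℝ) (hα : -1 < α) : laguerreL α 0 x = 1 := by
  have : Real.Gamma (α + 1) ≠ 0 := (Real.Gamma_pos_of_pos (by linarith)).ne'
  simp [laguerreL, this]

lemma lagL_succ (α x : ℝ) (hα : -1 < α) (n : ℕ) :
    laguerreL α (n + 1) x = laguerreL (α + 1) (n + 1) x - laguerreL (α + 1) n x := by
  unfold laguerreL
  rw [Finset.sum_range_succ, Finset.sum_range_succ _ (n + 1), add_sub_right_comm,
    ← Finset.sum_sub_distrib]
  have hpos : ∀ j : ℕ, 0 < (j : ℝ) + α + 1 := fun j => by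
    have : (0 : ℝ) ≤ j := Nat.cast_nonneg j
    linarith
  have hG : ∀ j : ℕ, Real.Gamma ((j : ℝ) + α + 1) ≠ 0 := fun j =>
    (Real.Gamma_pos_of_pos (hpos j)).ne'
  have hS : ∀ j : ℕ, Real.Gamma ((j : ℝ) + (α + 1) + 1)
      = ((j : ℝ) + α + 1) * Real.Gamma ((j : ℝ) + α + 1) := fun j => by
    rw [← Real.Gamma_add_one (hpos j).ne']; ring_nf
  have hS' : ∀ j : ℕ, Real.Gamma (((j + 1 : ℕ) : ℝ) + α + 1)
      = ((j : ℝ) + α + 1) * Real.Gamma ((j : ℝ) + α + 1) := fun j => by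
    rw [← Real.Gamma_add_one (hpos j).ne']; push_cast; ring_nf
  congr 1
  · refine Finset.sum_congr rfl fun i hi => ?_
    have hi' : i ≤ n := by simpa [Nat.lt_succ_iff] using hi
    obtain ⟨d, rfl⟩ := Nat.exists_eq_add_of_le hi'
    have e1 : i + d + 1 - i = d + 1 := by omega
    have e2 : i + d - i = d := by omega
    rw [e1, e2, hS, hS, hS, hS', Nat.factorial_succ]
    have h1 := hG i
    have h2 := (hpos i).ne'
    have h3 := hG (i + d)
    have h5 : (d.factorial : ℝ) ≠ 0 := by positivity
    have h6 : (i.factorial : ℝ) ≠ 0 := by positivity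
    have h7 : (d : ℝ) + 1 ≠ 0 := by positivity
    push_cast at *
    field_simp
    ring
  · have h1 := hG (n + 1)
    have h2 := (hpos (n + 1)).ne'
    rw [hS]
    field_simp

lemma lagL_conn (x : ℝ) (k : ℕ) : ∀ (α : ℝ), -1 < α → ∀ n : ℕ,
    laguerreL α n x = ∑ i ∈ Finset.range (n + 1),
      (-1) ^ i * (k.choose i : ℝ) * laguerreL (α + k) (n - i) x := by
  induction k with
  | zero =>
    intro α hα n
    rw [Finset.sum_range_succ']
    simp
  | succ k ih =>
    intro α hα n
    have e : α + ((k + 1 : ℕ) : ℝ) = α + 1 + k := by push_cast; ring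
    rw [e]
    cases n with
    | zero =>
      have : -1 < α + 1 + k := by
        have : (0 : ℝ) ≤ k := Nat.cast_nonneg k
        linarith
      simp [lagL_zero _ _ hα, lagL_zero _ _ this]
    | succ n =>
      rw [lagL_succ α x hα, ih (α + 1) (by linarith) (n + 1), ih (α + 1) (by linarith) n,
        Finset.sum_range_succ', Finset.sum_range_succ' _ (n + 1), add_sub_right_comm,
        ← Finset.sum_sub_distrib]
      congr 1
      · refine Finset.sum_congr rfl fun i _ => ?_
        rw [Nat.choose_succ_succ, Nat.add_sub_add_right]
        push_cast
        ring
      · simp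

/-- weight -/
noncomputable def lagW (β x : ℝ) : ℝ := x ^ β * Real.exp (-x)

lemma mono_integral (β : ℝ) (hβ : -1 < β) (j : ℕ) :
    IntegrableOn (fun x => x ^ j * lagW β x) (Set.Ioi 0) ∧
    ∫ x in Set.Ioi (0 : ℝ), x ^ j * lagW β x = Real.Gamma ((j : ℝ) + β + 1) := by
  have hp : 0 < (j : ℝ) + β + 1 := by
    have : (0 : ℝ) ≤ j := Nat.cast_nonneg j
    linarith
  have he : Set.EqOn (fun x : ℝ => Real.exp (-x) * x ^ ((j : ℝ) + β + 1 - 1))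
      (fun x => x ^ j * lagW β x) (Set.Ioi 0) := by
    intro x hx
    have hx : 0 < x := hx
    simp only [lagW]
    rw [add_sub_cancel_right, Real.rpow_add hx, Real.rpow_natCast]
    ring
  constructor
  · exact (integrableOn_congr_fun he measurableSet_Ioi).1 (Real.GammaIntegral_convergent hp)
  · rw [Real.Gamma_eq_integral hp]
    exact (setIntegral_congr_fun measurableSet_Ioi he).symm

lemma gamma_asc (j : ℕ) (z : ℝ) (hz : 0 < z) :
    Real.Gamma (z + j) = (ascPochhammer ℝ j).eval z * Real.Gamma z := by
  induction j with
  | zero => simp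
  | succ j ih =>
    have : z + j ≠ 0 := by positivity
    push_cast
    rw [← add_assoc, Real.Gamma_add_one this, ih, ascPochhammer_succ_right]
    simp
    ring

lemma alt_sum (n j : ℕ) (hj : j ≤ n) (y : ℝ) :
    ∑ i ∈ Finset.range (n + 1), (-1 : ℝ) ^ (n - i) * (n.choose i : ℝ) *
      (ascPochhammer ℝ j).eval (y + i) = if j = n then (n.factorial : ℝ) else 0 := by
  have h := fwdDiff_iter_eq_sum_shift (1 : ℝ) (ascPochhammer ℝ j).eval n y
  have : ∑ i ∈ Finset.range (n + 1), (-1 : ℝ) ^ (n - i) * (n.choose i : ℝ) *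
      (ascPochhammer ℝ j).eval (y + i) = (fwdDiff (1 : ℝ))^[n] (ascPochhammer ℝ j).eval y := by
    rw [h]
    refine Finset.sum_congr rfl fun i _ => ?_
    simp [zsmul_eq_mul]
  rw [this]
  split_ifs with hjn
  · subst hjn
    have := Polynomial.fwdDiff_iter_degree_eq_factorial (ascPochhammer ℝ j)
    rw [ascPochhammer_natDegree, (monic_ascPochhammer ℝ j).leadingCoeff] at this
    rw [this]
    simp
  · rw [Polynomial.fwdDiff_iter_eq_zero_of_degree_lt]
    · simp
    · rw [ascPochhammer_natDegree]; omega

lemma lag_mono (β : ℝ) (hβ : -1 < β) (n j : ℕ) :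
    IntegrableOn (fun x => x ^ j * laguerreL β n x * lagW β x) (Set.Ioi 0) ∧
    (j ≤ n → ∫ x in Set.Ioi (0 : ℝ), x ^ j * laguerreL β n x * lagW β x =
      if j = n then (-1) ^ n * Real.Gamma ((n : ℝ) + β + 1) else 0) := by
  have he : (fun x => x ^ j * laguerreL β n x * lagW β x) = fun x =>
      ∑ i ∈ Finset.range (n + 1), (-1) ^ i * Real.Gamma ((n : ℝ) + β + 1) /
      (Real.Gamma ((i : ℝ) + β + 1) * ((n - i).factorial : ℝ) * (i.factorial : ℝ)) *
        (x ^ (i + j) * lagW β x) := by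
    ext x
    unfold laguerreL
    rw [Finset.mul_sum, Finset.sum_mul]
    refine Finset.sum_congr rfl fun i _ => ?_
    ring
  rw [he]
  have hint : ∀ i ∈ Finset.range (n + 1), Integrable (fun x =>
      (-1) ^ i * Real.Gamma ((n : ℝ) + β + 1) /
      (Real.Gamma ((i : ℝ) + β + 1) * ((n - i).factorial : ℝ) * (i.factorial : ℝ)) *
        (x ^ (i + j) * lagW β x)) (volume.restrict (Set.Ioi 0)) := fun i _ =>
    (mono_integral β hβ (i + j)).1.const_mul _
  refine ⟨integrable_finsetSum _ hint, fun hj => ?_⟩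
  rw [integral_finsetSum _ hint]
  have h0 := alt_sum n j hj (β + 1)
  have : ∀ i ∈ Finset.range (n + 1), (∫ x in Set.Ioi (0 : ℝ),
      (-1) ^ i * Real.Gamma ((n : ℝ) + β + 1) /
      (Real.Gamma ((i : ℝ) + β + 1) * ((n - i).factorial : ℝ) * (i.factorial : ℝ)) *
        (x ^ (i + j) * lagW β x)) = (-1) ^ n * Real.Gamma ((n : ℝ) + β + 1) / n.factorial *
        ((-1 : ℝ) ^ (n - i) * (n.choose i : ℝ) * (ascPochhammer ℝ j).eval (β + 1 + i)) := by
    intro i hi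
    have hi' : i ≤ n := by simpa [Nat.lt_succ_iff] using hi
    rw [integral_const_mul, (mono_integral β hβ (i + j)).2]
    have hp : 0 < (β + 1 + i : ℝ) := by
      have : (0 : ℝ) ≤ i := Nat.cast_nonneg i
      linarith
    have e1 : ((i + j : ℕ) : ℝ) + β + 1 = β + 1 + i + j := by push_cast; ring
    have e2 : (i : ℝ) + β + 1 = β + 1 + i := by ring
    rw [e1, e2, gamma_asc _ _ hp, Nat.cast_choose ℝ hi']
    have hG := (Real.Gamma_pos_of_pos hp).ne'
    have e3 : (-1 : ℝ) ^ i = (-1) ^ n * (-1) ^ (n - i) := by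
      obtain ⟨d, rfl⟩ := Nat.exists_eq_add_of_le hi'
      rw [Nat.add_sub_cancel_left, pow_add, mul_assoc, ← mul_pow]
      simp
    rw [e3]
    have h5 : (n.factorial : ℝ) ≠ 0 := by positivity
    have h6 : (i.factorial : ℝ) ≠ 0 := by positivity
    have h7 : ((n - i).factorial : ℝ) ≠ 0 := by positivity
    field_simp
  rw [Finset.sum_congr rfl this, ← Finset.mul_sum, h0]
  have h5 : (n.factorial : ℝ) ≠ 0 := by positivity
  split_ifs
  · field_simp
  · simp

lemma lag_orth_le (β : ℝ) (hβ : -1 < β) (n m : ℕ) (hm : m ≤ n) :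
    IntegrableOn (fun x => laguerreL β m x * laguerreL β n x * lagW β x) (Set.Ioi 0) ∧
    ∫ x in Set.Ioi (0 : ℝ), laguerreL β m x * laguerreL β n x * lagW β x =
      if m = n then Real.Gamma ((n : ℝ) + β + 1) / n.factorial else 0 := by
  have he : (fun x => laguerreL β m x * laguerreL β n x * lagW β x) = fun x =>
      ∑ i ∈ Finset.range (m + 1), (-1) ^ i * Real.Gamma ((m : ℝ) + β + 1) /
      (Real.Gamma ((i : ℝ) + β + 1) * ((m - i).factorial : ℝ) * (i.factorial : ℝ)) *
        (x ^ i * laguerreL β n x * lagW β x) := by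
    ext x
    rw [laguerreL, Finset.sum_mul, Finset.sum_mul]
    refine Finset.sum_congr rfl fun i _ => ?_
    ring
  rw [he]
  have hint : ∀ i ∈ Finset.range (m + 1), Integrable (fun x =>
      (-1) ^ i * Real.Gamma ((m : ℝ) + β + 1) /
      (Real.Gamma ((i : ℝ) + β + 1) * ((m - i).factorial : ℝ) * (i.factorial : ℝ)) *
        (x ^ i * laguerreL β n x * lagW β x)) (volume.restrict (Set.Ioi 0)) := fun i _ =>
    (lag_mono β hβ n i).1.const_mul _
  refine ⟨integrable_finsetSum _ hint, ?_⟩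
  rw [integral_finsetSum _ hint, Finset.sum_range_succ, Finset.sum_eq_zero, zero_add,
    integral_const_mul, (lag_mono β hβ n m).2 hm]
  · split_ifs with h
    · subst h
      have hG : Real.Gamma ((m : ℝ) + β + 1) ≠ 0 := (Real.Gamma_pos_of_pos (by
        have : (0 : ℝ) ≤ m := Nat.cast_nonneg m
        linarith)).ne'
      have h5 : (m.factorial : ℝ) ≠ 0 := by positivity
      have h6 : (-1 : ℝ) ^ m * (-1) ^ m = 1 := by rw [← mul_pow]; simp
      simp only [Nat.sub_self, Nat.factorial_zero, Nat.cast_one]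
      field_simp
      rw [pow_two, h6]
    · simp
  · intro i hi
    have hi' : i < m := by simpa using hi
    rw [integral_const_mul, (lag_mono β hβ n i).2 (by omega), if_neg (by omega), mul_zero]

lemma lag_orth (β : ℝ) (hβ : -1 < β) (n m : ℕ) :
    IntegrableOn (fun x => laguerreL β m x * laguerreL β n x * lagW β x) (Set.Ioi 0) ∧
    ∫ x in Set.Ioi (0 : ℝ), laguerreL β m x * laguerreL β n x * lagW β x =
      if m = n then Real.Gamma ((n : ℝ) + β + 1) / n.factorial else 0 := by
  rcases le_total m n with h | h
  · exact lag_orth_le β hβ n m h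
  · have := lag_orth_le β hβ m n h
    simp only [mul_comm (laguerreL β n _) (laguerreL β m _)] at this
    refine ⟨this.1, this.2.trans ?_⟩
    by_cases hmn : m = n
    · subst hmn; rfl
    · rw [if_neg hmn, if_neg (Ne.symm hmn)]

/-- For every `n ∈ ℕ`, real `α > −1`, and `k ∈ ℕ`, the `k`-th moment of
the Rakhmanov density of the orthonormal Laguerre polynomial equals
`(n! Γ(k+α+1)/Γ(n+α+1)) · Σ_{r=0}^n C(k, n−r)² · Γ(k+α+r+1)/(r! Γ(k+α+1))`. -/
theorem laguerre_moments (n : ℕ) (α : ℝ) (hα : -1 < α) (k : ℕ) :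
    (∫ x in Set.Ioi (0 : ℝ), x ^ k * laguerreρ α n x) =
      (n.factorial : ℝ) * Real.Gamma ((k : ℝ) + α + 1) / Real.Gamma ((n : ℝ) + α + 1) *
        ∑ r ∈ Finset.range (n + 1),
          ((k.choose (n - r) : ℝ)) ^ 2 *
            (Real.Gamma ((k : ℝ) + α + (r : ℝ) + 1) /
              ((r.factorial : ℝ) * Real.Gamma ((k : ℝ) + α + 1))) := by
  have hk0 : (0 : ℝ) ≤ k := Nat.cast_nonneg k
  have hβ : -1 < α + k := by linarith
  have he : Set.EqOn (fun x : ℝ => x ^ k * laguerreρ α n x)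
      (fun x => ((n.factorial : ℝ) / Real.Gamma ((n : ℝ) + α + 1)) *
        ∑ i ∈ Finset.range (n + 1), ∑ j ∈ Finset.range (n + 1),
          ((-1) ^ i * (k.choose i : ℝ)) * ((-1) ^ j * (k.choose j : ℝ)) *
          (laguerreL (α + k) (n - i) x * laguerreL (α + k) (n - j) x * lagW (α + k) x))
      (Set.Ioi 0) := by
    intro x hx
    have hx : 0 < x := hx
    have hW : lagW (α + k) x = x ^ k * x ^ α * Real.exp (-x) := by
      rw [lagW, Real.rpow_add hx, Real.rpow_natCast]
      ring
    have hsum : ∑ i ∈ Finset.range (n + 1), ∑ j ∈ Finset.range (n + 1),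
          ((-1) ^ i * (k.choose i : ℝ)) * ((-1) ^ j * (k.choose j : ℝ)) *
          (laguerreL (α + k) (n - i) x * laguerreL (α + k) (n - j) x * lagW (α + k) x)
        = laguerreL α n x ^ 2 * lagW (α + k) x := by
      rw [lagL_conn x k α hα n, pow_two, Finset.sum_mul_sum, Finset.sum_mul]
      refine Finset.sum_congr rfl fun i _ => ?_
      rw [Finset.sum_mul]
      refine Finset.sum_congr rfl fun j _ => ?_
      ring
    simp only [hsum]
    rw [hW, laguerreρ]
    ring
  have hint : ∀ i j : ℕ, Integrable (fun x =>
      ((-1) ^ i * (k.choose i : ℝ)) * ((-1) ^ j * (k.choose j : ℝ)) *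
          (laguerreL (α + k) (n - i) x * laguerreL (α + k) (n - j) x * lagW (α + k) x))
      (volume.restrict (Set.Ioi 0)) := fun i j =>
    (lag_orth (α + k) hβ (n - j) (n - i)).1.const_mul _
  rw [setIntegral_congr_fun measurableSet_Ioi he, integral_const_mul,
    integral_finsetSum _ (fun i _ => integrable_finsetSum _ fun j _ => hint i j),
    mul_div_right_comm, mul_assoc]
  congr 1
  rw [Finset.mul_sum, ← Finset.sum_range_reflect _ (n + 1)]
  refine Finset.sum_congr rfl fun r hr => ?_
  have hr' : r ≤ n := by simpa [Nat.lt_succ_iff] using hr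
  have e1 : n + 1 - 1 - r = n - r := by omega
  rw [e1, integral_finsetSum _ (fun j _ => hint _ j)]
  rw [Finset.sum_eq_single (n - r)]
  · rw [integral_const_mul, (lag_orth (α + k) hβ _ _).2, if_pos rfl]
    have e2 : n - (n - r) = r := by omega
    have e3 : (r : ℝ) + (α + k) + 1 = k + α + r + 1 := by ring
    have hG : Real.Gamma ((k : ℝ) + α + 1) ≠ 0 := (Real.Gamma_pos_of_pos (by linarith)).ne'
    have h6 : (-1 : ℝ) ^ (n - r) * (-1) ^ (n - r) = 1 := by rw [← mul_pow]; simp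
    rw [e2, e3, mul_mul_mul_comm, h6]
    field_simp
  · intro j hj hne
    have hj' : j ≤ n := by simpa [Nat.lt_succ_iff] using hj
    rw [integral_const_mul, (lag_orth (α + k) hβ _ _).2, if_neg (by omega), mul_zero]
  · intro h
    exact absurd (Finset.mem_range.2 (by omega)) h
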